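/- Key one-step lemma for Bregman proximal steps with inexact minimization. Let Q ⊆ ℝⁿ be a nonempty closed convex set, ψ : Q → ℝ a convex function, d : Q → ℝ a convex continuously differentiable function with Bregman divergence V[y](x) = d(x) − d(y) − ⟨∇d(y), x − y⟩, y ∈ Q, and δ̃ ≥ 0. If x̃ ∈ Q is a δ̃-inexact minimizer on Q of φ(x) = ψ(x) + V[y](x), i.e., there exists h ∈ ∂φ(x̃) with ⟨h, x − x̃⟩ ≥ −δ̃ for all x ∈ Q, then for all x ∈ Q: ψ(x) + V[y](x) ≥ ψ(x̃) + V[y](x̃) + V[x̃](x) − δ̃. -/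

import Mathlib

open RealInnerProductSpace

/-!
For the three points `y`, `x̃`, `x`,
`V[y](x) = V[y](x̃) + V[x̃](x) + ⟪∇d(x̃) - ∇d(y), x - x̃⟫`, and `∇d(x̃) - ∇d(y)` is the gradient of
`V[y]` at `x̃`. Subtracting it from `h ∈ ∂(ψ + V[y])(x̃)` leaves a subgradient of `ψ`, whose
subgradient inequality, added to the identity, bounds `ψ(x) + V[y](x)` from below by
`ψ(x̃) + V[y](x̃) + V[x̃](x) + ⟪h, x - x̃⟫`.
-/

section NormedSpace

variable {E : Type*} [NormedAddCommGroup E] [NormedSpace ℝ E]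
  {Q : Set E} {ψ d f : E → ℝ} {f' p q h : StrongDual ℝ E} {a x y : E} {δ : ℝ}

/-- The subdifferential at `a` of a function considered only on `Q`, as a set of continuous linear
functionals; in an inner product space these are the functionals `⟪h, ·⟫`. -/
def subdifferentialOn (Q : Set E) (φ : E → ℝ) (a : E) : Set (StrongDual ℝ E) :=
  {h | ∀ x ∈ Q, φ a + h (x - a) ≤ φ x}

/-- `a` is a `δ`-inexact minimizer of `φ` on `Q`: the first-order optimality condition holds up to
an error `δ`. As for `IsMinOn`, membership `a ∈ Q` is not included. -/
def IsInexactMinOn (φ : E → ℝ) (δ : ℝ) (Q : Set E) (a : E) : Prop :=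
  ∃ h ∈ subdifferentialOn Q φ a, ∀ x ∈ Q, -δ ≤ h (x - a)

/-- The Bregman divergence `V[y](x)` of `d`. The slope `p` of the linearization of `d` at `y` is an
explicit argument, so that it may be a derivative relative to a set or a subgradient. -/
def bregmanDivergence (d : E → ℝ) (p : StrongDual ℝ E) (y x : E) : ℝ :=
  d x - d y - p (x - y)

theorem bregmanDivergence_three_point (d : E → ℝ) (p q : StrongDual ℝ E) (y a x : E) :
    bregmanDivergence d p y x =
      bregmanDivergence d p y a + bregmanDivergence d q a x + (q - p) (x - a) := by
  simp only [bregmanDivergence, sub_apply, map_sub]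
  ring

theorem hasFDerivWithinAt_bregmanDivergence (hd : HasFDerivWithinAt d q Q a)
    (p : StrongDual ℝ E) (y : E) :
    HasFDerivWithinAt (bregmanDivergence d p y) (q - p) Q a :=
  (hd.sub_const (d y)).sub
    (p.hasFDerivAt.comp a (hasFDerivAt_sub_const y)).hasFDerivWithinAt

theorem sub_mem_subdifferentialOn_of_add (hψ : ConvexOn ℝ Q ψ) (hf : HasFDerivWithinAt f f' Q a)
    (ha : a ∈ Q) (hh : h ∈ subdifferentialOn Q (fun z ↦ ψ z + f z) a) :
    h - f' ∈ subdifferentialOn Q ψ a := by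
  intro x hx
  -- On the epigraph of `ψ` the nonsmooth term `ψ` becomes the linear coordinate `z.2`.
  let epi : Set (E × ℝ) := {z | z.1 ∈ Q ∧ ψ z.1 ≤ z.2}
  let F : E × ℝ → ℝ := fun z ↦ z.2 + f z.1 - h z.1
  have hmin : IsMinOn F epi (a, ψ a) := by
    rintro ⟨z, s⟩ ⟨hz, (hs : ψ z ≤ s)⟩
    have hsub : ψ a + f a + h (z - a) ≤ ψ z + f z := hh z hz
    rw [map_sub] at hsub
    change ψ a + f a - h a ≤ s + f z - h z
    linarith
  have hF : HasFDerivWithinAt F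
      (.snd ℝ E ℝ + f' ∘L .fst ℝ E ℝ - h ∘L .fst ℝ E ℝ) epi (a, ψ a) :=
    (hasFDerivWithinAt_snd.add (hf.comp (a, ψ a) hasFDerivWithinAt_fst fun _ hz ↦ hz.1)).sub
      (h ∘L .fst ℝ E ℝ).hasFDerivWithinAt
  have hdir : (x, ψ x) - (a, ψ a) ∈ posTangentConeAt epi (a, ψ a) :=
    sub_mem_posTangentConeAt_of_segment_subset <|
      hψ.convex_epigraph.segment_subset ⟨ha, le_rfl⟩ ⟨hx, le_rfl⟩
  have hopt : 0 ≤ (ψ x - ψ a) + f' (x - a) - h (x - a) :=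
    hmin.localize.hasFDerivWithinAt_nonneg hF hdir
  rw [sub_apply]
  linarith

theorem bregman_one_step_lemma_general (hψ : ConvexOn ℝ Q ψ) (hd : HasFDerivWithinAt d q Q a)
    (ha : a ∈ Q) (hmin : IsInexactMinOn (fun z ↦ ψ z + bregmanDivergence d p y z) δ Q a)
    (hx : x ∈ Q) :
    ψ a + bregmanDivergence d p y a + bregmanDivergence d q a x - δ ≤
      ψ x + bregmanDivergence d p y x := by
  obtain ⟨h, hh, hδ⟩ := hmin
  have hsub : ψ a + (h - (q - p)) (x - a) ≤ ψ x :=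
    sub_mem_subdifferentialOn_of_add hψ (hasFDerivWithinAt_bregmanDivergence hd p y) ha hh x hx
  rw [sub_apply] at hsub
  linarith [bregmanDivergence_three_point d p q y a x, hδ x hx]

end NormedSpace

/-- **Key one-step lemma for Bregman proximal steps with inexact minimization.**
If `x̃` is a `δ̃`-inexact minimizer on `Q` of `φ(x) = ψ(x) + V[y](x)`, where
`V[y](x) = d(x) − d(y) − ⟪∇d(y), x − y⟫` is the Bregman divergence of a convex
continuously differentiable `d`, then
`ψ(x) + V[y](x) ≥ ψ(x̃) + V[y](x̃) + V[x̃](x) − δ̃` for all `x ∈ Q`. -/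
theorem bregman_one_step_lemma
    {n : ℕ} (Q : Set (EuclideanSpace ℝ (Fin n)))
    (hQne : Q.Nonempty) (hQclosed : IsClosed Q) (hQconv : Convex ℝ Q)
    (ψ : EuclideanSpace ℝ (Fin n) → ℝ) (hψconv : ConvexOn ℝ Q ψ)
    (d : EuclideanSpace ℝ (Fin n) → ℝ) (hdconv : ConvexOn ℝ Q d)
    (Dd : EuclideanSpace ℝ (Fin n) → EuclideanSpace ℝ (Fin n))
    (hd_diff : ∀ z ∈ Q, HasGradientWithinAt d (Dd z) Q z)
    (hd_cont : ContinuousOn Dd Q)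
    -- Bregman divergence
    (V : EuclideanSpace ℝ (Fin n) → EuclideanSpace ℝ (Fin n) → ℝ)
    (hV : ∀ w z, V w z = d z - d w - ⟪Dd w, z - w⟫)
    (y : EuclideanSpace ℝ (Fin n)) (hyQ : y ∈ Q)
    (δt : ℝ) (hδt : 0 ≤ δt)
    (xt : EuclideanSpace ℝ (Fin n)) (hxtQ : xt ∈ Q)
    -- `xt` is a `δ̃`-inexact minimizer of `φ(x) = ψ(x) + V[y](x)` on `Q`
    (hmin : ∃ h : EuclideanSpace ℝ (Fin n),
      (∀ x ∈ Q, ψ x + V y x ≥ ψ xt + V y xt + ⟪h, x - xt⟫) ∧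
      (∀ x ∈ Q, ⟪h, x - xt⟫ ≥ -δt)) :
    ∀ x ∈ Q, ψ x + V y x ≥ ψ xt + V y xt + V xt x - δt := by
  obtain rfl : V = fun w ↦ bregmanDivergence d (InnerProductSpace.toDual ℝ _ (Dd w)) w :=
    funext₂ hV
  obtain ⟨h, hh, hδ⟩ := hmin
  exact fun x hx ↦ bregman_one_step_lemma_general hψconv (hd_diff xt hxtQ).hasFDerivWithinAt hxtQ
    ⟨InnerProductSpace.toDual ℝ _ h, hh, hδ⟩ hx
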